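/- arXiv:1005.1635 — 4 statements merged into one kernel-verified Lean document; each statement's English description precedes it below -/
import Mathlib

section
/- Let a, P1, P2 be real numbers with a ≥ 0, P2 ≥ 0 and a^2 * P1 satisfying 0 ≤ a^2 * P1 ≤ 1. Then C(2*a^2*P1 + 2*P2) ≤ C( P2 / (a^2*P1 + 1) ) + 1. -/
/-- Gaussian capacity function: C(x) = (1/2) * log₂(1 + x). -/
noncomputable def C (x : ℝ) : ℝ := (1/2) * Real.logb 2 (1 + x)

/-!
The chain rule `C (x + y) = C x + C (y / (1 + x))` splits the total rate into the rate of the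
interference and the rate of the signal when that interference is treated as noise. Interference
of power at most `1` therefore costs at most `C 1 = 1/2` bit, and doubling the total power costs
at most another `C 1`.
-/

section ChainRule

variable {x y : ℝ}

theorem C_one : C 1 = 1 / 2 := by
  rw [C, one_add_one_eq_two, Real.logb_self_eq_one one_lt_two, mul_one]

theorem C_le_C (hx : -1 < x) (hxy : x ≤ y) : C x ≤ C y := by
  have one_add_pos : 0 < 1 + x := by linarith
  unfold C
  gcongr
  exact one_lt_two

theorem C_add (hx : 1 + x ≠ 0) (hxy : 1 + x + y ≠ 0) :
    C (x + y) = C x + C (y / (1 + x)) := by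
  have factor : 1 + (x + y) = (1 + x) * (1 + y / (1 + x)) := by
    field_simp
    ring
  have snr_ne_zero : 1 + y / (1 + x) ≠ 0 := by
    rw [one_add_div hx]
    exact div_ne_zero hxy hx
  rw [C, factor, Real.logb_mul hx snr_ne_zero, mul_add, C, C]

theorem C_one_add_mul_le (hx : 0 ≤ x) (hxy : -1 < (1 + x) * y) :
    C ((1 + x) * y) ≤ C x + C y := by
  have one_add_ne_zero : 1 + x ≠ 0 := by positivity
  calc
    C ((1 + x) * y) ≤ C (x + (1 + x) * y) := C_le_C hxy (le_add_of_nonneg_left hx)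
    _ = C x + C y := by
      rw [C_add one_add_ne_zero (by linarith), mul_div_cancel_left₀ y one_add_ne_zero]

end ChainRule

theorem stmt_3 (a P1 P2 : ℝ) (ha : 0 ≤ a) (hP2 : 0 ≤ P2)
    (h0 : 0 ≤ a ^ 2 * P1) (h1 : a ^ 2 * P1 ≤ 1) :
    C (2 * a ^ 2 * P1 + 2 * P2) ≤ C (P2 / (a ^ 2 * P1 + 1)) + 1 := by
  have interference_cost : C (a ^ 2 * P1) ≤ C 1 := C_le_C (by linarith) h1
  calc
    C (2 * a ^ 2 * P1 + 2 * P2) = C ((1 + 1) * (a ^ 2 * P1 + P2)) := by ring_nf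
    _ ≤ C 1 + C (a ^ 2 * P1 + P2) := C_one_add_mul_le zero_le_one (by linarith)
    _ = C 1 + (C (a ^ 2 * P1) + C (P2 / (1 + a ^ 2 * P1))) := by
      rw [C_add (by positivity) (by positivity)]
    _ ≤ C 1 + (C 1 + C (P2 / (1 + a ^ 2 * P1))) := by gcongr
    _ = C (P2 / (a ^ 2 * P1 + 1)) + 1 := by
      rw [C_one, add_comm 1 (a ^ 2 * P1)]
      ring
end

section
/- Let a, P1, P2 be real numbers with P1 ≥ 0, P2 ≥ 0, a ≥ 0 and a^2 ≤ P2 + 1. Then C(P1) + C(P2) ≥ C(P2 + a^2 * P1). -/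
theorem strictMonoOn_C : StrictMonoOn C (Set.Ioi (-1)) := by
  intro x hx y _ hxy
  have hx_pos : 0 < 1 + x := neg_lt_iff_pos_add'.mp hx
  have hlog : Real.logb 2 (1 + x) < Real.logb 2 (1 + y) :=
    Real.logb_lt_logb one_lt_two hx_pos (by gcongr)
  unfold C
  gcongr

theorem C_add_C {x y : ℝ} (hx : 1 + x ≠ 0) (hy : 1 + y ≠ 0) :
    C x + C y = C (x + y + x * y) := by
  have hprod : 1 + (x + y + x * y) = (1 + x) * (1 + y) := by ring
  unfold C
  rw [hprod, Real.logb_mul hx hy, mul_add]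

theorem stmt_6 (a P1 P2 : ℝ) (hP1 : 0 ≤ P1) (hP2 : 0 ≤ P2) (ha : 0 ≤ a)
    (h : a ^ 2 ≤ P2 + 1) :
    C (P2 + a ^ 2 * P1) ≤ C P1 + C P2 := by
  have hle : P2 + a ^ 2 * P1 ≤ P1 + P2 + P1 * P2 :=
    calc P2 + a ^ 2 * P1 ≤ P2 + (P2 + 1) * P1 := by gcongr
      _ = P1 + P2 + P1 * P2 := by ring
  have hlow : -1 < P2 + a ^ 2 * P1 := neg_one_lt_zero.trans_le (by positivity)
  calc C (P2 + a ^ 2 * P1) ≤ C (P1 + P2 + P1 * P2) :=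
        strictMonoOn_C.monotoneOn hlow (hlow.trans_le hle) hle
    _ = C P1 + C P2 := (C_add_C (by positivity) (by positivity)).symm
end

section
/- Let a, P1, P2 be real numbers with a > 0, P2 ≥ 0 and a^2 * P1 ≥ 1. Then C(2*a^2*P1 + 2*P2) ≤ C( (a^2*P1 − 1 + 2*P2) / 4 ) + 3/2. -/
theorem C_le_C_add_half_iff {x y b : ℝ} (hx : -1 < x) (hy : -1 < y) :
    C x ≤ C y + b / 2 ↔ 1 + x ≤ 2 ^ b * (1 + y) := by
  have hx' : 0 < 1 + x := by linarith
  have hy' : 0 < 1 + y := by linarith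
  have logb_rpow_mul : Real.logb 2 (2 ^ b * (1 + y)) = b + Real.logb 2 (1 + y) := by
    rw [Real.logb_mul (by positivity) hy'.ne', Real.logb_rpow two_pos one_lt_two.ne']
  calc C x ≤ C y + b / 2
      ↔ Real.logb 2 (1 + x) ≤ b + Real.logb 2 (1 + y) := by
        unfold C
        constructor <;> intro h <;> linarith
    _ ↔ Real.logb 2 (1 + x) ≤ Real.logb 2 (2 ^ b * (1 + y)) := by rw [logb_rpow_mul]
    _ ↔ 1 + x ≤ 2 ^ b * (1 + y) := Real.logb_le_logb one_lt_two hx' (by positivity)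

theorem stmt_9_general (a P1 P2 : ℝ) (hP1 : 0 ≤ P1) (hP2 : 0 ≤ P2) :
    C (2 * a ^ 2 * P1 + 2 * P2) ≤ C ((a ^ 2 * P1 - 1 + 2 * P2) / 4) + 3 / 2 := by
  have received_nonneg : 0 ≤ a ^ 2 * P1 := by positivity
  refine (C_le_C_add_half_iff (by linarith) (by linarith)).2 ?_
  calc 1 + (2 * a ^ 2 * P1 + 2 * P2)
      ≤ 6 + 2 * a ^ 2 * P1 + 4 * P2 := by linarith
    _ = 2 ^ (3 : ℝ) * (1 + (a ^ 2 * P1 - 1 + 2 * P2) / 4) := by norm_num; ring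

theorem stmt_9 (a P1 P2 : ℝ) (ha : 0 < a) (hP2 : 0 ≤ P2) (hI : 1 ≤ a ^ 2 * P1) :
    C (2 * a ^ 2 * P1 + 2 * P2) ≤ C ((a ^ 2 * P1 - 1 + 2 * P2) / 4) + 3 / 2 :=
  stmt_9_general a P1 P2 (pos_of_mul_pos_right (one_pos.trans_le hI) (sq_nonneg a)).le hP2
end

section
/- Let a, P1, P2 be real numbers with 0 < a ≤ 1, P2 ≥ 0 and a^2 * P1 ≥ 1. Then C( P1*P2 + P1*(1 + 2*a^2) + 2*P2 ) ≤ C( (P2 + 2) / (2*a^2) ) + C( (a^2*P1 − 1) / 2 ) + 3/2. -/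
/-!
A gap of `3 / 2` between capacities is a factor `2 ^ 3 = 8` between the arguments of the logarithms.
With `b = a ^ 2`, the difference
`8 * (1 + (P2 + 2) / (2 * b)) * (1 + (b * P1 - 1) / 2) - (1 + P1 * P2 + P1 * (1 + 2 * b) + 2 * P2)`
is affine in `P2`, with positive constant term and slope `(b * P1 - 2 * (b - 1)) / b`; the slope is
nonnegative exactly when `2 * (b - 1) ≤ b * P1`, in particular when `b ≤ 1`.
-/

theorem C_le_C_add_C_add_iff {x y z r : ℝ} (hx : -1 < x) (hy : -1 < y) (hz : -1 < z) :
    C x ≤ C y + C z + r ↔ 1 + x ≤ (1 + y) * (1 + z) * 2 ^ (2 * r) := by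
  have hx' : 0 < 1 + x := by linarith
  have hy' : 0 < 1 + y := by linarith
  have hz' : 0 < 1 + z := by linarith
  have logb_prod : Real.logb 2 ((1 + y) * (1 + z) * 2 ^ (2 * r)) =
      Real.logb 2 (1 + y) + Real.logb 2 (1 + z) + 2 * r := by
    rw [Real.logb_mul (by positivity) (by positivity), Real.logb_mul hy'.ne' hz'.ne',
      Real.logb_rpow two_pos (by norm_num)]
  rw [← Real.logb_le_logb one_lt_two hx' (by positivity), logb_prod]
  unfold C
  constructor <;> intro h <;> linarith

theorem one_add_sum_snr_le_eight_mul {b P1 P2 : ℝ} (hb : 0 < b) (hP1 : 0 ≤ P1) (hP2 : 0 ≤ P2)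
    (hbP1 : 2 * (b - 1) ≤ b * P1) :
    1 + (P1 * P2 + P1 * (1 + 2 * b) + 2 * P2) ≤
      (1 + (P2 + 2) / (2 * b)) * (1 + (b * P1 - 1) / 2) * 8 := by
  have gap_eq : (1 + (P2 + 2) / (2 * b)) * (1 + (b * P1 - 1) / 2) * 8 -
      (1 + (P1 * P2 + P1 * (1 + 2 * b) + 2 * P2)) =
        P2 * ((b * P1 - 2 * (b - 1)) / b) + (3 * P1 + 2 * b * P1 + 3 + 4 / b) := by
    field_simp
    ring
  have slope_nonneg : 0 ≤ (b * P1 - 2 * (b - 1)) / b := div_nonneg (sub_nonneg.2 hbP1) hb.le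
  rw [← sub_nonneg, gap_eq]
  exact add_nonneg (mul_nonneg hP2 slope_nonneg) (by positivity)

theorem stmt_16_general (a P1 P2 : ℝ) (ha : a ≠ 0) (hP1 : 0 ≤ P1) (hP2 : 0 ≤ P2)
    (haP1 : 2 * (a ^ 2 - 1) ≤ a ^ 2 * P1) :
    C (P1 * P2 + P1 * (1 + 2 * a ^ 2) + 2 * P2) ≤
      C ((P2 + 2) / (2 * a ^ 2)) + C ((a ^ 2 * P1 - 1) / 2) + 3 / 2 := by
  have hx : 0 ≤ P1 * P2 + P1 * (1 + 2 * a ^ 2) + 2 * P2 := by positivity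
  have hy : 0 ≤ (P2 + 2) / (2 * a ^ 2) := by positivity
  have hz : 0 ≤ a ^ 2 * P1 := by positivity
  have two_rpow : (2 : ℝ) ^ (2 * (3 / 2) : ℝ) = 8 := by norm_num
  rw [C_le_C_add_C_add_iff (by linarith) (by linarith) (by linarith), two_rpow]
  exact one_add_sum_snr_le_eight_mul (by positivity) hP1 hP2 haP1

theorem stmt_16 (a P1 P2 : ℝ) (ha0 : 0 < a) (ha1 : a ≤ 1) (hP2 : 0 ≤ P2)
    (hI : 1 ≤ a ^ 2 * P1) :
    C (P1 * P2 + P1 * (1 + 2 * a ^ 2) + 2 * P2) ≤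
      C ((P2 + 2) / (2 * a ^ 2)) + C ((a ^ 2 * P1 - 1) / 2) + 3 / 2 := by
  have hP1 : 0 < P1 := pos_of_mul_pos_right (zero_lt_one.trans_le hI) (sq_nonneg a)
  exact stmt_16_general a P1 P2 ha0.ne' hP1.le hP2 (by linarith [pow_le_one₀ (n := 2) ha0.le ha1])
end
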